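/- Let a be a real number with a ≥ 4 and let η, λ be real numbers with 0 < η < 1/(a−1). Suppose there exist real numbers x, y, z and positive real numbers α₁, α₂, β₁, β₂, γ₁, γ₂ satisfying the three vector equations in ℝ³: (0,0,0) = (x,y,z) + α₁·(−1,0,0) + α₂·(−1,−1,0); (1, η, η²) = (x,y,z) + β₁·(−1,0,0) + β₂·(2−a, 1, 1); and (λ, λη, λη²) = (x,y,z) + γ₁·(2−a, 1, 1) + γ₂·(a−2, a−1, 1). Then λ·(1 − (a−1)η) < 1 − η; in particular λ < (1−η)/(1−(a−1)η), so λ is bounded above in terms of a and η. (This shows the disconnected lattice path A−B−C−D|F for polytope family 20 contradicts the genericity of points in Mikhalkin position, from the proof of Lemma 4.10 in Appendix A.) -/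

import Mathlib

/-- The disconnected lattice path A−B−C−D|F for polytope family 20 contradicts the
genericity of points in Mikhalkin position (proof of Lemma 4.10 in Appendix A): if the
three points `(0,0,0)`, `(1,η,η²)`, `(λ,λη,λη²)` lie in the prescribed cells of a
tropical surface with vertex `(x,y,z)` dual to a polytope of family 20 with parameter
`a`, then `λ(1 − (a−1)η) < 1 − η`, so `λ` is bounded above in terms of `a` and `η`. -/
theorem stmt_17 (a η lam : ℝ) (ha : 4 ≤ a) (hη0 : 0 < η) (hη : η < 1 / (a - 1))
    (h : ∃ (x y z α₁ α₂ β₁ β₂ γ₁ γ₂ : ℝ),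
      0 < α₁ ∧ 0 < α₂ ∧ 0 < β₁ ∧ 0 < β₂ ∧ 0 < γ₁ ∧ 0 < γ₂ ∧
      -- (0,0,0) = (x,y,z) + α₁ (−1,0,0) + α₂ (−1,−1,0)
      (0 = x + α₁ * (-1) + α₂ * (-1) ∧
       0 = y + α₁ * 0 + α₂ * (-1) ∧
       0 = z + α₁ * 0 + α₂ * 0) ∧
      -- (1,η,η²) = (x,y,z) + β₁ (−1,0,0) + β₂ (2−a,1,1)
      (1 = x + β₁ * (-1) + β₂ * (2 - a) ∧
       η = y + β₁ * 0 + β₂ * 1 ∧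
       η ^ 2 = z + β₁ * 0 + β₂ * 1) ∧
      -- (λ,λη,λη²) = (x,y,z) + γ₁ (2−a,1,1) + γ₂ (a−2,a−1,1)
      (lam = x + γ₁ * (2 - a) + γ₂ * (a - 2) ∧
       lam * η = y + γ₁ * 1 + γ₂ * (a - 1) ∧
       lam * η ^ 2 = z + γ₁ * 1 + γ₂ * 1)) :
    lam * (1 - (a - 1) * η) < 1 - η ∧ lam < (1 - η) / (1 - (a - 1) * η) := by
  obtain ⟨x, y, z, α₁, α₂, β₁, β₂, γ₁, γ₂, -, -, -, -, hγ₁, -,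
    ⟨-, -, hz⟩, ⟨-, hy, hβ⟩, ⟨-, hlamy, hlamz⟩⟩ := h
  have hprod : (a - 1) * η < 1 := by
    rwa [lt_div_iff₀ (by linarith), mul_comm] at hη
  have key : η * (1 - η - lam * (1 - (a - 1) * η)) = (a - 2) * γ₁ := by
    linear_combination hy - hβ - hlamy + (a - 1) * hlamz - (a - 1) * hz + hz
  have hpos : 0 < 1 - η - lam * (1 - (a - 1) * η) :=
    pos_of_mul_pos_right (key ▸ mul_pos (by linarith) hγ₁) hη0.le
  have hlt : lam * (1 - (a - 1) * η) < 1 - η := by linarith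
  exact ⟨hlt, (lt_div_iff₀ (by linarith)).2 hlt⟩
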